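/- Let G be an n-vertex unicyclic graph with unique cycle C_l = v_1…v_l and branches T_1,…,T_l, and let x ∈ V(T_k). Then the reverse cover cost satisfies RC(x) = 2n·R(x) − 2·Kf(G) − Σ_{i=1}^{l} D_{T_i}(v_i) + n·d(x, v_k), where RC(x) = Σ_{y∈V(G)} H_{yx}. -/

import Mathlib

open SimpleGraph Finset

attribute [local instance] Classical.propDecidable

variable {V : Type*}

/-- Degree of a vertex as a real number. -/
noncomputable def degR [Fintype V] (G : SimpleGraph V) (x : V) : ℝ :=
  ((Finset.univ.filter fun y => G.Adj x y).card : ℝ)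

/-- Number of edges of a graph. -/
noncomputable def esize (G : SimpleGraph V) : ℕ := Nat.card G.edgeSet

/-- Dirichlet energy of a potential. -/
noncomputable def energyFn [Fintype V] (G : SimpleGraph V) (φ : V → ℝ) : ℝ :=
  (1/2) * ∑ u, ∑ v, if G.Adj u v then (φ u - φ v)^2 else 0

/-- Effective resistance between two vertices (unit resistors on edges),
via the Dirichlet variational principle: the reciprocal of the minimal energy
of a potential with value 1 at `x` and 0 at `y`. -/
noncomputable def eres [Fintype V] (G : SimpleGraph V) (x y : V) : ℝ :=
  (sInf {e : ℝ | ∃ φ : V → ℝ, φ x = 1 ∧ φ y = 0 ∧ e = energyFn G φ})⁻¹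

/-- The transition matrix of the simple random walk, killed at `y`. -/
noncomputable def hitMat [Fintype V] (G : SimpleGraph V) (y : V) : Matrix V V ℝ :=
  Matrix.of fun u v => if v = y then 0 else if G.Adj u v then (degR G u)⁻¹ else 0

/-- Expected hitting time `H_{xy}` of the simple random walk from `x` to `y`,
expressed as the sum of the survival probabilities of the walk killed at `y`. -/
noncomputable def hitting [Fintype V] (G : SimpleGraph V) (x y : V) : ℝ :=
  if x = y then 0 else ∑' k : ℕ, ∑ z, (hitMat G y ^ k) x z

/-- Resistance-centrality `R(x)`. -/
noncomputable def Rres [Fintype V] (G : SimpleGraph V) (x : V) : ℝ := ∑ y, eres G x y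

/-- Weighted resistance-centrality `R^w(x)`. -/
noncomputable def Rw [Fintype V] (G : SimpleGraph V) (x : V) : ℝ :=
  ∑ y, degR G y * eres G x y

/-- Kirchhoff index `Kf(G)`. -/
noncomputable def Kf [Fintype V] (G : SimpleGraph V) : ℝ :=
  (1/2) * ∑ x, ∑ y, eres G x y

/-- Additive degree-Kirchhoff index `Kf⁺(G)`. -/
noncomputable def KfPlus [Fintype V] (G : SimpleGraph V) : ℝ :=
  (1/2) * ∑ x, ∑ y, (degR G x + degR G y) * eres G x y

/-- Multiplicative degree-Kirchhoff index `Kf*(G)`. -/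
noncomputable def KfStar [Fintype V] (G : SimpleGraph V) : ℝ :=
  (1/2) * ∑ x, ∑ y, degR G x * degR G y * eres G x y

/-- Cover cost `CC(x) = Σ_y H_{xy}`. -/
noncomputable def coverCost [Fintype V] (G : SimpleGraph V) (x : V) : ℝ :=
  ∑ y, hitting G x y

/-- Reverse cover cost `RC(x) = Σ_y H_{yx}`. -/
noncomputable def reverseCoverCost [Fintype V] (G : SimpleGraph V) (x : V) : ℝ :=
  ∑ y, hitting G y x

/-- Centrality (transmission) `D(x) = Σ_y d(x,y)`. -/
noncomputable def Dcent [Fintype V] (G : SimpleGraph V) (x : V) : ℝ :=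
  ∑ y, (G.dist x y : ℝ)

/-- Weighted centrality `D^w(x) = Σ_y deg(y)·d(x,y)`. -/
noncomputable def Dw [Fintype V] (G : SimpleGraph V) (x : V) : ℝ :=
  ∑ y, degR G y * (G.dist x y : ℝ)

/-- Wiener index `W(G)`. -/
noncomputable def Wiener [Fintype V] (G : SimpleGraph V) : ℝ :=
  (1/2) * ∑ x, ∑ y, (G.dist x y : ℝ)

/-- `D_{T}(v)`: sum of distances from `v` to the vertices of its connected
component in `G'` (used for the branch trees of a unicyclic graph). -/
noncomputable def branchD [Fintype V] (G' : SimpleGraph V) (v : V) : ℝ :=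
  ∑ u, if G'.Reachable v u then (G'.dist v u : ℝ) else 0

/-- The set of edges of the cycle `c 0 - c 1 - ⋯ - c (l-1) - c 0`. -/
def cycleEdges {l : ℕ} [NeZero l] (c : Fin l → V) : Set (Sym2 V) :=
  Set.range fun i : Fin l => s(c i, c (i + 1))

/-- Distance from a vertex to a set of vertices. -/
noncomputable def distToSet [Fintype V] (G : SimpleGraph V) (x : V) (s : Set V) : ℕ :=
  sInf {d | ∃ y ∈ s, G.dist x y = d}

/-- `v` is the center of a star. -/
def IsStarCenter (G : SimpleGraph V) (v : V) : Prop := ∀ u, u ≠ v → G.Adj v u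

/-- `G` is a star. -/
def IsStar (G : SimpleGraph V) : Prop := ∃ v, IsStarCenter G v

/-- The lollipop graph `P_n^l` : a cycle `C_l` on `0,…,l-1` together with a
path on `l,…,n-1` attached at the cycle vertex `0`. -/
def lollipop (n l : ℕ) : SimpleGraph (Fin n) :=
  SimpleGraph.fromRel (fun a b =>
    (a.val + 1 = b.val ∧ b.val < l) ∨ (a.val = 0 ∧ b.val = l - 1) ∨
    (a.val = 0 ∧ b.val = l) ∨ (l ≤ a.val ∧ a.val + 1 = b.val))

/-- The graph `S_n^l` : a cycle `C_l` on `0,…,l-1` with `n - l` pendant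
vertices `l,…,n-1` attached at the cycle vertex `0`. -/
def starCycle (n l : ℕ) : SimpleGraph (Fin n) :=
  SimpleGraph.fromRel (fun a b =>
    (a.val + 1 = b.val ∧ b.val < l) ∨ (a.val = 0 ∧ b.val = l - 1) ∨
    (a.val = 0 ∧ l ≤ b.val))

/-- The cycle graph `C_n` on `Fin n`. -/
def cycleG (n : ℕ) : SimpleGraph (Fin n) :=
  SimpleGraph.fromRel (fun a b => a.val + 1 = b.val ∨ (a.val = 0 ∧ b.val = n - 1))

/-!
Every hitting time and every resistance of a connected graph can be read off from the Green matrix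
`(L + J)⁻¹`. If moreover `f` is a potential with `L f = c - deg`, then the hitting times to `x`
form the solution of `L h = deg` away from `x` with `h x = 0`, namely `f x - f` plus `c n` times a
Green potential, and summing them gives `RC(x) = c n R(x) - c Kf(G) - ∑ f + n f(x)`.

In a unicyclic graph the distance `D` to the cycle is such a potential, with `c = 2`. Send each
vertex off the cycle to its neighbour towards the cycle, and each cycle vertex to the next one.
Since there are as many edges as vertices, every edge joins a vertex to its image, so the
neighbours of `u` are its image and its preimages. In `∑ (D u - D w + 1)` over the neighbours `w`
of `u`, a preimage counts `1` on the cycle and `0` off it, and the image of `u` counts `1` if `u`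
is on the cycle and `2` otherwise, so the sum is always `2`. Finally `D x = d(x, v_k)`, in `G` as
well as in `T_k`, for `x` in the branch `T_k`, so that `∑ D = ∑ D_{T_i}(v_i)`.
-/

section Resistance

open Matrix

variable [Fintype V] (G : SimpleGraph V)

theorem degR_eq_degree (x : V) : degR G x = G.degree x := by
  rw [degR, degree, neighborFinset_eq_filter]

theorem energyFn_eq_dotProduct (φ : V → ℝ) : energyFn G φ = φ ⬝ᵥ G.lapMatrix ℝ *ᵥ φ := by
  rw [← Matrix.toLinearMap₂'_apply', lapMatrix_toLinearMap₂', energyFn]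
  ring

theorem energyFn_nonneg (φ : V → ℝ) : 0 ≤ energyFn G φ := by
  simpa [energyFn_eq_dotProduct] using (posSemidef_lapMatrix ℝ G).dotProduct_mulVec_nonneg φ

theorem dotProduct_lapMatrix_mulVec_comm (φ ψ : V → ℝ) :
    φ ⬝ᵥ G.lapMatrix ℝ *ᵥ ψ = ψ ⬝ᵥ G.lapMatrix ℝ *ᵥ φ := by
  rw [dotProduct_mulVec, dotProduct_comm, ← mulVec_transpose, (G.isSymm_lapMatrix (R := ℝ)).eq]

theorem energyFn_add_smul (φ ψ : V → ℝ) (t : ℝ) :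
    energyFn G (φ + t • ψ) =
      energyFn G φ + 2 * t * (φ ⬝ᵥ G.lapMatrix ℝ *ᵥ ψ) + t ^ 2 * energyFn G ψ := by
  simp only [energyFn_eq_dotProduct, mulVec_add, mulVec_smul, add_dotProduct, dotProduct_add,
    smul_dotProduct, dotProduct_smul, smul_eq_mul, dotProduct_lapMatrix_mulVec_comm G ψ φ]
  ring

theorem eres_self (x : V) : eres G x x = 0 := by
  have h_empty : {e : ℝ | ∃ φ : V → ℝ, φ x = 1 ∧ φ x = 0 ∧ e = energyFn G φ} = ∅ :=
    Set.eq_empty_iff_forall_notMem.2 fun _ ⟨_, h1, h0, _⟩ => one_ne_zero (h1.symm.trans h0)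
  rw [eres, h_empty, Real.sInf_empty, _root_.inv_zero]

variable {G}

/-- `ψ` is the potential of a unit current entering the network at `x` and leaving it at `y`. -/
def IsUnitCurrentPotential (G : SimpleGraph V) (x y : V) (ψ : V → ℝ) : Prop :=
  G.lapMatrix ℝ *ᵥ ψ = Pi.single x 1 - Pi.single y 1

namespace IsUnitCurrentPotential

variable {x y : V} {ψ : V → ℝ}

theorem dotProduct_lapMatrix_mulVec (hψ : IsUnitCurrentPotential G x y ψ) (φ : V → ℝ) :
    φ ⬝ᵥ G.lapMatrix ℝ *ᵥ ψ = φ x - φ y := by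
  rw [hψ, dotProduct_sub, dotProduct_single_one, dotProduct_single_one]

theorem energyFn_eq (hψ : IsUnitCurrentPotential G x y ψ) : energyFn G ψ = ψ x - ψ y := by
  rw [energyFn_eq_dotProduct, hψ.dotProduct_lapMatrix_mulVec]

theorem lt (hψ : IsUnitCurrentPotential G x y ψ) (hxy : x ≠ y) : ψ y < ψ x := by
  refine sub_pos.1 <| (hψ.energyFn_eq ▸ energyFn_nonneg G ψ).lt_of_ne' fun h_zero => ?_
  have h_harmonic : G.lapMatrix ℝ *ᵥ ψ = 0 := by
    rw [← (posSemidef_lapMatrix ℝ G).dotProduct_mulVec_zero_iff, star_trivial,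
      ← energyFn_eq_dotProduct, hψ.energyFn_eq, h_zero]
  have h_at_x := congrFun (hψ.symm.trans h_harmonic) x
  simp [hxy] at h_at_x

theorem inv_le_energyFn (hψ : IsUnitCurrentPotential G x y ψ) (hxy : x ≠ y) {φ : V → ℝ}
    (hφ : φ x - φ y = 1) : (ψ x - ψ y)⁻¹ ≤ energyFn G φ := by
  have h_pos := sub_pos.2 (hψ.lt hxy)
  have h_nonneg := energyFn_nonneg G (φ + (-(ψ x - ψ y)⁻¹) • ψ)
  rw [energyFn_add_smul, hψ.dotProduct_lapMatrix_mulVec, hφ, hψ.energyFn_eq] at h_nonneg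
  have h_cancel : (-(ψ x - ψ y)⁻¹) ^ 2 * (ψ x - ψ y) = (ψ x - ψ y)⁻¹ := by field_simp
  linarith

theorem isLeast_energyFn (hψ : IsUnitCurrentPotential G x y ψ) (hxy : x ≠ y) :
    IsLeast {e : ℝ | ∃ φ : V → ℝ, φ x = 1 ∧ φ y = 0 ∧ e = energyFn G φ} (ψ x - ψ y)⁻¹ := by
  have h_pos := sub_pos.2 (hψ.lt hxy)
  refine ⟨⟨fun v => (ψ x - ψ y)⁻¹ * (ψ v - ψ y), by field_simp, by simp, ?_⟩, ?_⟩
  · have h_affine : (fun v => (ψ x - ψ y)⁻¹ * (ψ v - ψ y)) =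
        (fun _ => -((ψ x - ψ y)⁻¹ * ψ y)) + (ψ x - ψ y)⁻¹ • ψ := by
      ext v; simp only [Pi.add_apply, Pi.smul_apply, smul_eq_mul]; ring
    rw [h_affine, energyFn_add_smul, hψ.dotProduct_lapMatrix_mulVec, hψ.energyFn_eq]
    have h_const (a : ℝ) : energyFn G (fun _ => a) = 0 := by simp [energyFn]
    rw [h_const]
    field_simp
    ring
  · rintro e ⟨φ, hφx, hφy, rfl⟩
    exact hψ.inv_le_energyFn hxy (by rw [hφx, hφy, sub_zero])

theorem eres_eq (hψ : IsUnitCurrentPotential G x y ψ) : eres G x y = ψ x - ψ y := by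
  rcases eq_or_ne x y with rfl | hxy
  · rw [eres_self, sub_self]
  · rw [eres, (hψ.isLeast_energyFn hxy).csInf_eq, inv_inv]

end IsUnitCurrentPotential

end Resistance

section Green

open Matrix

variable [Fintype V] {G : SimpleGraph V}

/-- The Green matrix `(L + J)⁻¹`, where `L` is the Laplacian and `J` the all-ones matrix. Adding `J`
makes the Laplacian of a connected graph invertible, changing it only on constants. -/
noncomputable def greenMatrix (G : SimpleGraph V) : Matrix V V ℝ :=
  (G.lapMatrix ℝ + vecMulVec 1 1)⁻¹

theorem lapMatrix_add_ones_mulVec (G : SimpleGraph V) (φ : V → ℝ) :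
    (G.lapMatrix ℝ + vecMulVec 1 1) *ᵥ φ = G.lapMatrix ℝ *ᵥ φ + fun _ => ∑ v, φ v := by
  rw [add_mulVec, vecMulVec_mulVec, one_dotProduct]
  ext; simp

theorem sum_lapMatrix_mulVec (G : SimpleGraph V) (φ : V → ℝ) :
    ∑ v, (G.lapMatrix ℝ *ᵥ φ) v = 0 := by
  have h_const : G.lapMatrix ℝ *ᵥ 1 = 0 := G.lapMatrix_mulVec_const_eq_zero
  rw [← one_dotProduct, dotProduct_lapMatrix_mulVec_comm, h_const, dotProduct_zero]

theorem isUnit_lapMatrix_add_ones (hG : G.Connected) :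
    IsUnit (G.lapMatrix ℝ + vecMulVec 1 1) := by
  rw [← mulVec_injective_iff_isUnit]
  refine (injective_iff_map_eq_zero (mulVecLin _)).2 fun φ hφ => ?_
  rw [mulVecLin_apply, lapMatrix_add_ones_mulVec] at hφ
  have h_sum : ∑ v, φ v = 0 := by
    have h_pair : energyFn G φ + (∑ v, φ v) ^ 2 = 0 := by
      have h := congrArg (φ ⬝ᵥ ·) hφ
      simp only [dotProduct_add, ← energyFn_eq_dotProduct, dotProduct_zero] at h
      rw [← h, dotProduct, ← Finset.sum_mul, sq]
    exact pow_eq_zero_iff two_ne_zero |>.1 <|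
      (add_eq_zero_iff_of_nonneg (energyFn_nonneg G φ) (sq_nonneg _)).1 h_pair |>.2
  have h_harmonic : G.lapMatrix ℝ *ᵥ φ = 0 := by
    rw [← hφ, h_sum]; ext; simp
  have h_const (u v : V) : φ u = φ v :=
    G.lapMatrix_mulVec_eq_zero_iff_forall_reachable.1 h_harmonic u v (hG.preconnected u v)
  have := hG.nonempty
  ext u
  simpa [h_const _ u] using h_sum

theorem isSymm_greenMatrix (G : SimpleGraph V) : (greenMatrix G).IsSymm := by
  rw [IsSymm, greenMatrix, transpose_nonsing_inv, transpose_add, transpose_vecMulVec,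
    (G.isSymm_lapMatrix (R := ℝ)).eq]

theorem lapMatrix_add_ones_mulVec_greenMatrix (hG : G.Connected) (a : V) :
    (G.lapMatrix ℝ + vecMulVec 1 1) *ᵥ greenMatrix G a = Pi.single a 1 := by
  have h_col : greenMatrix G a = greenMatrix G *ᵥ Pi.single a 1 := by
    rw [mulVec_single_one]
    exact funext fun b => (isSymm_greenMatrix G).apply b a
  rw [h_col, mulVec_mulVec, greenMatrix, mul_nonsing_inv _ ((isUnit_iff_isUnit_det _).1 <|
    isUnit_lapMatrix_add_ones hG), one_mulVec]

theorem sum_greenMatrix (hG : G.Connected) (a : V) :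
    ∑ v, greenMatrix G a v = (Fintype.card V : ℝ)⁻¹ := by
  have h := congrArg (∑ v, · v) (lapMatrix_add_ones_mulVec_greenMatrix hG a)
  simp only [lapMatrix_add_ones_mulVec, Pi.add_apply, Finset.sum_add_distrib,
    sum_lapMatrix_mulVec, zero_add, Finset.sum_const, Finset.card_univ, nsmul_eq_mul,
    Finset.sum_pi_single', Finset.mem_univ, if_true] at h
  exact eq_inv_of_mul_eq_one_right h

theorem lapMatrix_mulVec_greenMatrix (hG : G.Connected) (a : V) :
    G.lapMatrix ℝ *ᵥ greenMatrix G a = Pi.single a 1 - fun _ => (Fintype.card V : ℝ)⁻¹ := by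
  rw [← lapMatrix_add_ones_mulVec_greenMatrix hG a, lapMatrix_add_ones_mulVec,
    sum_greenMatrix hG, add_sub_cancel_right]

theorem eres_eq_greenMatrix (hG : G.Connected) (a b : V) :
    eres G a b = greenMatrix G a a + greenMatrix G b b - 2 * greenMatrix G a b := by
  have h_pot : IsUnitCurrentPotential G a b (greenMatrix G a - greenMatrix G b) := by
    rw [IsUnitCurrentPotential, mulVec_sub, lapMatrix_mulVec_greenMatrix hG,
      lapMatrix_mulVec_greenMatrix hG, sub_sub_sub_cancel_right]
  rw [h_pot.eres_eq, Pi.sub_apply, Pi.sub_apply, (isSymm_greenMatrix G).apply a b]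
  ring

theorem Rres_eq_greenMatrix (hG : G.Connected) (a : V) :
    Rres G a = Fintype.card V * greenMatrix G a a + (greenMatrix G).trace
      - 2 * (Fintype.card V : ℝ)⁻¹ := by
  simp only [Rres, eres_eq_greenMatrix hG, Finset.sum_sub_distrib, Finset.sum_add_distrib,
    ← Finset.mul_sum, sum_greenMatrix hG, Finset.sum_const, Finset.card_univ, nsmul_eq_mul, trace,
    diag_apply]

theorem Kf_eq_greenMatrix (hG : G.Connected) :
    Kf G = Fintype.card V * (greenMatrix G).trace - 1 := by
  have := hG.nonempty
  have h_sum : Kf G = 1 / 2 * ∑ a, Rres G a := rfl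
  have h_trace : ∑ a, greenMatrix G a a = (greenMatrix G).trace := rfl
  simp only [h_sum, Rres_eq_greenMatrix hG, Finset.sum_sub_distrib, Finset.sum_add_distrib,
    ← Finset.mul_sum, Finset.sum_const, Finset.card_univ, nsmul_eq_mul, h_trace]
  field_simp
  ring

end Green

section HittingTime

open Matrix Filter Topology

section NonnegMatrix

variable {ι R : Type*} [Fintype ι]

theorem pow_mulVec_one_le_one [Semiring R] [PartialOrder R] [IsOrderedRing R] {A : Matrix ι ι R}
    (hA : ∀ i j, 0 ≤ A i j) (hA_one : A *ᵥ 1 ≤ 1) (k : ℕ) : A ^ k *ᵥ 1 ≤ 1 := by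
  induction k with
  | zero => rw [pow_zero, one_mulVec]
  | succ k ih =>
    refine le_trans (fun i => ?_) ih
    rw [pow_succ, ← mulVec_mulVec]
    exact dotProduct_le_dotProduct_of_nonneg_left hA_one (pow_apply_nonneg hA k i)

theorem sum_range_pow_mulVec_one [Ring R] {A : Matrix ι ι R} {g : ι → R} (hg : g = 1 + A *ᵥ g)
    (N : ℕ) : ∑ k ∈ Finset.range N, A ^ k *ᵥ 1 = g - A ^ N *ᵥ g := by
  have h_one : (1 : ι → R) = g - A *ᵥ g := eq_sub_of_add_eq hg.symm
  have h_term (k : ℕ) : A ^ k *ᵥ 1 = A ^ k *ᵥ g - A ^ (k + 1) *ᵥ g := by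
    rw [h_one, mulVec_sub, mulVec_mulVec, pow_succ]
  simp only [h_term, Finset.sum_range_sub' (fun k => A ^ k *ᵥ g), pow_zero, one_mulVec]

variable {A : Matrix ι ι ℝ}

theorem abs_mulVec_le_norm_mul (hA : ∀ i j, 0 ≤ A i j) (f : ι → ℝ) (i : ι) :
    |(A *ᵥ f) i| ≤ ‖f‖ * (A *ᵥ 1) i := by
  simp only [mulVec, dotProduct, Pi.one_apply, mul_one, Finset.mul_sum]
  refine (Finset.abs_sum_le_sum_abs _ _).trans (Finset.sum_le_sum fun j _ => ?_)
  rw [abs_mul, abs_of_nonneg (hA i j), mul_comm]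
  exact mul_le_mul_of_nonneg_right (norm_le_pi_norm f j) (hA i j)

theorem hasSum_pow_mulVec_one (hA : ∀ i j, 0 ≤ A i j) (hA_one : A *ᵥ 1 ≤ 1) {g : ι → ℝ}
    (hg : g = 1 + A *ᵥ g) (i : ι) : HasSum (fun k => (A ^ k *ᵥ 1) i) (g i) := by
  have h_partial (N : ℕ) : ∑ k ∈ Finset.range N, (A ^ k *ᵥ 1) i = g i - (A ^ N *ᵥ g) i := by
    rw [← Pi.sub_apply, ← sum_range_pow_mulVec_one hg, Finset.sum_apply]
  have h_remainder (N : ℕ) : |(A ^ N *ᵥ g) i| ≤ ‖g‖ * (A ^ N *ᵥ 1) i :=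
    abs_mulVec_le_norm_mul (pow_apply_nonneg hA N) g i
  have h_nonneg (k : ℕ) : 0 ≤ (A ^ k *ᵥ 1) i :=
    dotProduct_nonneg_of_nonneg (pow_apply_nonneg hA k i) zero_le_one
  have h_summable : Summable fun k => (A ^ k *ᵥ 1) i := by
    refine summable_of_sum_range_le (c := g i + ‖g‖) h_nonneg fun N => ?_
    have h_le : ‖g‖ * (A ^ N *ᵥ 1) i ≤ ‖g‖ :=
      mul_le_of_le_one_right (norm_nonneg g) (pow_mulVec_one_le_one hA hA_one N i)
    linarith [h_partial N, neg_le_of_abs_le (h_remainder N)]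
  have h_remainder_tendsto : Tendsto (fun N => (A ^ N *ᵥ g) i) atTop (𝓝 0) :=
    squeeze_zero_norm h_remainder (by simpa using h_summable.tendsto_atTop_zero.const_mul ‖g‖)
  rw [h_summable.hasSum_iff_tendsto_nat]
  simpa [h_partial] using h_remainder_tendsto.const_sub (g i)

end NonnegMatrix

variable [Fintype V] {G : SimpleGraph V}

theorem hitMat_mulVec_apply (G : SimpleGraph V) (x u : V) (f : V → ℝ) :
    (hitMat G x *ᵥ f) u =
      (G.degree u : ℝ)⁻¹ * ∑ v ∈ G.neighborFinset u, Function.update f x 0 v := by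
  rw [mulVec, dotProduct, Finset.mul_sum, neighborFinset_eq_filter, Finset.sum_filter]
  refine Finset.sum_congr rfl fun v _ => ?_
  rw [hitMat, of_apply, degR_eq_degree, Function.update_apply]
  split_ifs <;> simp

theorem hitMat_nonneg (G : SimpleGraph V) (x u v : V) : 0 ≤ hitMat G x u v := by
  rw [hitMat, of_apply, degR_eq_degree]
  split_ifs <;> positivity

theorem hitMat_mulVec_one_le_one (G : SimpleGraph V) (x : V) : hitMat G x *ᵥ 1 ≤ 1 := by
  intro u
  rw [hitMat_mulVec_apply, inv_mul_eq_div]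
  refine div_le_one_of_le₀ ?_ (Nat.cast_nonneg _)
  rw [← card_neighborFinset_eq_degree, ← nsmul_one]
  refine Finset.sum_le_card_nsmul _ _ _ fun v _ => ?_
  rw [Function.update_apply]
  split_ifs <;> simp

theorem hitMat_mulVec_eq_sub_one {x : V} {h : V → ℝ} (hx : h x = 0) {u : V}
    (hu : 0 < G.degree u) (hh : (G.lapMatrix ℝ *ᵥ h) u = G.degree u) :
    (hitMat G x *ᵥ h) u = h u - 1 := by
  rw [lapMatrix_mulVec_apply] at hh
  rw [hitMat_mulVec_apply, Function.update_eq_self_iff.2 hx.symm]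
  field_simp
  linarith

theorem hitting_eq_of_lapMatrix_mulVec_eq_degree {x : V} {h : V → ℝ} (hx : h x = 0)
    (hdeg : ∀ u ≠ x, 0 < G.degree u) (hh : ∀ u ≠ x, (G.lapMatrix ℝ *ᵥ h) u = G.degree u) (y : V) :
    hitting G y x = h y := by
  rcases eq_or_ne y x with rfl | hyx
  · rw [hitting, if_pos rfl, hx]
  set g : V → ℝ := 1 + hitMat G x *ᵥ h with hg
  have hg_eq (u : V) (hu : u ≠ x) : g u = h u := by
    rw [hg, Pi.add_apply, hitMat_mulVec_eq_sub_one hx (hdeg u hu) (hh u hu), Pi.one_apply,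
      add_sub_cancel]
  have hg_fixed : g = 1 + hitMat G x *ᵥ g := by
    have h_update : Function.update g x 0 = Function.update h x 0 := by
      ext u
      rcases eq_or_ne u x with rfl | hu
      · simp
      · simp [hu, hg_eq]
    rw [hg]
    congr 1
    ext u
    rw [hitMat_mulVec_apply, hitMat_mulVec_apply, ← hg, h_update]
  have h_sum := hasSum_pow_mulVec_one (hitMat_nonneg G x) (hitMat_mulVec_one_le_one G x) hg_fixed y
  rw [hitting, if_neg hyx, ← hg_eq y hyx, ← h_sum.tsum_eq]
  simp only [mulVec, dotProduct_one]

theorem hitting_eq_greenMatrix (hG : G.Connected) {f : V → ℝ} {c : ℝ}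
    (hf : ∀ u, (G.lapMatrix ℝ *ᵥ f) u = c - G.degree u) (x y : V) :
    hitting G y x =
      f x - f y + c * Fintype.card V * (greenMatrix G x x - greenMatrix G x y) := by
  have := hG.nonempty
  let h : V → ℝ := (fun _ => f x + c * Fintype.card V * greenMatrix G x x) - f
    - (c * Fintype.card V) • greenMatrix G x
  have h_lap (u : V) (hu : u ≠ x) : (G.lapMatrix ℝ *ᵥ h) u = G.degree u := by
    have h_const (a : ℝ) : G.lapMatrix ℝ *ᵥ (fun _ => a) = 0 :=
      G.lapMatrix_mulVec_eq_zero_iff_forall_reachable.2 fun _ _ _ => rfl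
    simp only [h, mulVec_sub, mulVec_smul, h_const, lapMatrix_mulVec_greenMatrix hG, Pi.sub_apply,
      hf, Pi.smul_apply, Pi.single_eq_of_ne hu, smul_eq_mul, Pi.zero_apply]
    field_simp
    ring
  rw [hitting_eq_of_lapMatrix_mulVec_eq_degree (h := h) ?_
    (fun u hu => (hG.preconnected u x).degree_pos_left hu) h_lap y]
  all_goals
    simp only [h, Pi.sub_apply, Pi.smul_apply, smul_eq_mul]
    ring

theorem reverseCoverCost_eq_of_lapMatrix_mulVec_eq (hG : G.Connected) {f : V → ℝ} {c : ℝ}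
    (hf : ∀ u, (G.lapMatrix ℝ *ᵥ f) u = c - G.degree u) (x : V) :
    reverseCoverCost G x =
      c * Fintype.card V * Rres G x - c * Kf G - ∑ u, f u + Fintype.card V * f x := by
  have := hG.nonempty
  simp only [reverseCoverCost, hitting_eq_greenMatrix hG hf, Finset.sum_add_distrib,
    Finset.sum_sub_distrib, ← Finset.mul_sum, sum_greenMatrix hG, Finset.sum_const,
    Finset.card_univ, nsmul_eq_mul, Rres_eq_greenMatrix hG, Kf_eq_greenMatrix hG]
  field_simp
  ring

end HittingTime

section DistToSet

variable [Fintype V] {G : SimpleGraph V} {s : Set V}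

theorem distToSet_le_dist {v : V} (hv : v ∈ s) (u : V) : distToSet G u s ≤ G.dist u v :=
  Nat.sInf_le ⟨v, hv, rfl⟩

theorem distToSet_of_mem {u : V} (hu : u ∈ s) : distToSet G u s = 0 :=
  Nat.le_zero.1 <| (distToSet_le_dist hu u).trans_eq dist_self

theorem exists_dist_eq_distToSet (hs : s.Nonempty) (u : V) :
    ∃ v ∈ s, G.dist u v = distToSet G u s :=
  Nat.sInf_mem (s := {d | ∃ v ∈ s, G.dist u v = d}) (hs.elim fun v hv => ⟨_, v, hv, rfl⟩)

theorem distToSet_le_distToSet_add_one (hG : G.Connected) (hs : s.Nonempty) {u w : V}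
    (h : G.Adj u w) : distToSet G u s ≤ distToSet G w s + 1 := by
  obtain ⟨v, hv, h_dist⟩ := exists_dist_eq_distToSet (G := G) hs w
  calc distToSet G u s ≤ G.dist u v := distToSet_le_dist hv u
    _ ≤ G.dist u w + G.dist w v := hG.dist_triangle
    _ = distToSet G w s + 1 := by rw [dist_eq_one_iff_adj.2 h, h_dist, add_comm]

theorem exists_adj_distToSet_add_one_eq (hG : G.Connected) (hs : s.Nonempty) {u : V}
    (hu : u ∉ s) : ∃ w, G.Adj u w ∧ distToSet G w s + 1 = distToSet G u s := by
  obtain ⟨v, hv, h_dist⟩ := exists_dist_eq_distToSet (G := G) hs u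
  obtain ⟨q, hq⟩ := hG.exists_walk_length_eq_dist u v
  cases q with
  | nil => exact absurd hv hu
  | @cons _ w _ h q =>
    refine ⟨w, h, le_antisymm ?_ (distToSet_le_distToSet_add_one hG hs h)⟩
    rw [← h_dist, ← hq, Walk.length_cons]
    exact Nat.add_le_add_right ((distToSet_le_dist hv w).trans (dist_le q)) 1

end DistToSet

section ParentMap

variable [Fintype V] {G : SimpleGraph V} {s : Set V} {p : V → V}

/-- `p` selects a neighbour `p y` of every vertex `y`: on `s` it runs through the vertices of `s`
along cycles of length at least three, and off `s` it moves one step closer to `s`. The cycle of a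
unicyclic graph is the case of interest, where `y ↦ s(y, p y)` enumerates all the edges. -/
structure IsParentMap (G : SimpleGraph V) (s : Set V) (p : V → V) : Prop where
  adj : ∀ y, G.Adj y (p y)
  bijOn : Set.BijOn p s s
  parent_parent_ne_of_mem : ∀ y ∈ s, p (p y) ≠ y
  distToSet_parent_of_notMem : ∀ y ∉ s, distToSet G (p y) s + 1 = distToSet G y s

/-- The vertex of `s` reached from `y` along the parent map `p`, that is, the root of the branch
containing `y`. -/
noncomputable def branchRoot (G : SimpleGraph V) (s : Set V) (p : V → V) (y : V) : V :=
  p^[distToSet G y s] y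

namespace IsParentMap

theorem induction (hp : IsParentMap G s p) {P : V → Prop} (mem : ∀ y ∈ s, P y)
    (parent : ∀ y ∉ s, P (p y) → P y) (y : V) : P y := by
  induction hd : distToSet G y s generalizing y with
  | zero =>
    refine mem y (not_not.1 fun hy => ?_)
    have := hp.distToSet_parent_of_notMem y hy
    omega
  | succ d ih =>
    by_cases hy : y ∈ s
    · exact mem y hy
    · have := hp.distToSet_parent_of_notMem y hy
      exact parent y hy (ih (p y) (by omega))

theorem parent_parent_ne (hp : IsParentMap G s p) (y : V) : p (p y) ≠ y := by
  by_cases hy : y ∈ s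
  · exact hp.parent_parent_ne_of_mem y hy
  intro h
  have hpy : p y ∉ s := fun hpy => hy (h ▸ hp.bijOn.mapsTo hpy)
  have h_y := hp.distToSet_parent_of_notMem y hy
  have h_py := hp.distToSet_parent_of_notMem (p y) hpy
  rw [h] at h_py
  omega

theorem bijective_edge (hp : IsParentMap G s p) (hcard : esize G = Fintype.card V) :
    Function.Bijective fun y => (⟨s(y, p y), hp.adj y⟩ : G.edgeSet) := by
  refine (Nat.bijective_iff_injective_and_card _).2 ⟨fun y z hyz => ?_, ?_⟩
  · rcases Sym2.eq_iff.1 (congrArg Subtype.val hyz) with ⟨h, -⟩ | ⟨hy, hz⟩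
    · exact h
    · exact absurd (hz ▸ hy.symm) (hp.parent_parent_ne y)
  · rw [Nat.card_eq_fintype_card, ← hcard, esize]

theorem adj_iff (hp : IsParentMap G s p) (hcard : esize G = Fintype.card V) {u w : V} :
    G.Adj u w ↔ w = p u ∨ p w = u := by
  constructor
  · intro h
    obtain ⟨y, hy⟩ := (hp.bijective_edge hcard).surjective ⟨s(u, w), h⟩
    rcases Sym2.eq_iff.1 (congrArg Subtype.val hy) with ⟨rfl, hw⟩ | ⟨rfl, hu⟩
    · exact Or.inl hw.symm
    · exact Or.inr hu
  · rintro (rfl | rfl)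
    · exact hp.adj u
    · exact (hp.adj w).symm

theorem sum_neighborFinset (hp : IsParentMap G s p) (hcard : esize G = Fintype.card V)
    (f : V → ℝ) (u : V) : ∑ w ∈ G.neighborFinset u, f w = f (p u) + ∑ w with p w = u, f w := by
  have h_insert : G.neighborFinset u = insert (p u) (univ.filter (p · = u)) := by
    ext w
    simp [hp.adj_iff hcard]
  rw [h_insert, Finset.sum_insert (by simpa using hp.parent_parent_ne u)]

theorem sum_indicator_children (hp : IsParentMap G s p) (u : V) :
    ∑ w with p w = u, s.indicator (1 : V → ℝ) w = s.indicator 1 u := by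
  by_cases hu : u ∈ s
  · obtain ⟨v, hv, rfl⟩ := hp.bijOn.surjOn hu
    rw [Finset.sum_eq_single v]
    · simp [hv, hu]
    · intro w hw hwv
      exact Set.indicator_of_notMem
        (fun hws => hwv (hp.bijOn.injOn hws hv (Finset.mem_filter.1 hw).2)) _
    · simp
  · rw [Set.indicator_of_notMem hu]
    refine Finset.sum_eq_zero fun w hw => Set.indicator_of_notMem (fun hws => hu ?_) _
    exact (Finset.mem_filter.1 hw).2 ▸ hp.bijOn.mapsTo hws

theorem distToSet_parent_add_one (hp : IsParentMap G s p) (y : V) :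
    (distToSet G (p y) s : ℝ) + 1 = distToSet G y s + s.indicator 1 y := by
  by_cases hy : y ∈ s
  · simp [distToSet_of_mem hy, distToSet_of_mem (hp.bijOn.mapsTo hy), hy]
  · simp [← hp.distToSet_parent_of_notMem y hy, hy]

theorem lapMatrix_mulVec_distToSet (hp : IsParentMap G s p) (hcard : esize G = Fintype.card V)
    (u : V) :
    (G.lapMatrix ℝ).mulVec (fun v => (distToSet G v s : ℝ)) u = 2 - G.degree u := by
  have h_child (w : V) (hw : w ∈ ({w | p w = u} : Finset V)) :
      (distToSet G u s - distToSet G w s + 1 : ℝ) = s.indicator 1 w := by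
    rw [← (Finset.mem_filter.1 hw).2]
    linarith [hp.distToSet_parent_add_one w]
  have h_sum : ∑ w ∈ G.neighborFinset u, (distToSet G u s - distToSet G w s + 1 : ℝ) = 2 := by
    rw [hp.sum_neighborFinset hcard, Finset.sum_congr rfl h_child, hp.sum_indicator_children]
    linarith [hp.distToSet_parent_add_one u]
  rw [lapMatrix_mulVec_apply, ← h_sum, Finset.sum_add_distrib, Finset.sum_sub_distrib]
  simp only [Finset.sum_const, card_neighborFinset_eq_degree, nsmul_eq_mul]
  ring

end IsParentMap

end ParentMap

section Branches

variable [Fintype V] {G : SimpleGraph V} {s : Set V} {p : V → V}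

theorem branchRoot_of_mem {y : V} (hy : y ∈ s) : branchRoot G s p y = y := by
  rw [branchRoot, distToSet_of_mem hy, Function.iterate_zero_apply]

/-- The graph `G` without the edges joining the vertices of `s` to their parents; its connected
components are the branches of `G` hanging at `s`. -/
def branchGraph (G : SimpleGraph V) (s : Set V) (p : V → V) : SimpleGraph V :=
  G.deleteEdges ((fun y => s(y, p y)) '' s)

namespace IsParentMap

theorem branchRoot_parent (hp : IsParentMap G s p) {y : V} (hy : y ∉ s) :
    branchRoot G s p (p y) = branchRoot G s p y := by
  rw [branchRoot, branchRoot, ← hp.distToSet_parent_of_notMem y hy, Function.iterate_succ_apply]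

theorem branchGraph_adj_parent (hp : IsParentMap G s p) {y : V} (hy : y ∉ s) :
    (branchGraph G s p).Adj y (p y) := by
  refine deleteEdges_adj.2 ⟨hp.adj y, ?_⟩
  rintro ⟨z, hz, h_edge⟩
  rcases Sym2.eq_iff.1 h_edge with ⟨rfl, -⟩ | ⟨-, rfl⟩
  · exact hy hz
  · exact hy (hp.bijOn.mapsTo hz)

theorem branchRoot_eq_of_branchGraph_adj (hp : IsParentMap G s p)
    (hcard : esize G = Fintype.card V) {u w : V} (h : (branchGraph G s p).Adj u w) :
    branchRoot G s p u = branchRoot G s p w := by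
  obtain ⟨h_adj, h_kept⟩ := deleteEdges_adj.1 h
  rcases (hp.adj_iff hcard).1 h_adj with rfl | rfl
  · exact (hp.branchRoot_parent fun hu => h_kept ⟨u, hu, rfl⟩).symm
  · exact hp.branchRoot_parent fun hw => h_kept ⟨w, hw, Sym2.eq_swap⟩

theorem branchRoot_mem (hp : IsParentMap G s p) (y : V) : branchRoot G s p y ∈ s := by
  induction y using hp.induction with
  | mem y hy => rwa [branchRoot_of_mem hy]
  | parent y hy ih => rwa [← hp.branchRoot_parent hy]

theorem exists_walk_branchRoot (hp : IsParentMap G s p) (y : V) :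
    ∃ q : (branchGraph G s p).Walk y (branchRoot G s p y), q.length = distToSet G y s := by
  induction y using hp.induction with
  | mem y hy =>
    rw [branchRoot_of_mem hy, distToSet_of_mem hy]
    exact ⟨.nil, rfl⟩
  | parent y hy ih =>
    obtain ⟨q, hq⟩ := ih
    rw [← hp.branchRoot_parent hy, ← hp.distToSet_parent_of_notMem y hy]
    exact ⟨.cons (hp.branchGraph_adj_parent hy) q, by rw [Walk.length_cons, hq]⟩

theorem branchGraph_reachable_iff (hp : IsParentMap G s p) (hcard : esize G = Fintype.card V)
    {v y : V} (hv : v ∈ s) : (branchGraph G s p).Reachable v y ↔ branchRoot G s p y = v := by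
  constructor
  · rintro ⟨q⟩
    rw [← branchRoot_of_mem (G := G) (p := p) hv]
    clear hv
    induction q with
    | nil => rfl
    | cons h _ ih => exact ih.trans (hp.branchRoot_eq_of_branchGraph_adj hcard h).symm
  · rintro rfl
    obtain ⟨q, -⟩ := hp.exists_walk_branchRoot y
    exact ⟨q.reverse⟩

theorem branchGraph_dist_eq_distToSet (hp : IsParentMap G s p)
    (hcard : esize G = Fintype.card V) {v y : V} (hv : v ∈ s)
    (h : (branchGraph G s p).Reachable v y) :
    (branchGraph G s p).dist v y = distToSet G y s := by
  apply le_antisymm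
  · obtain ⟨q, hq⟩ := hp.exists_walk_branchRoot y
    rw [SimpleGraph.dist_comm, ← hq, ← (hp.branchGraph_reachable_iff hcard hv).1 h]
    exact dist_le q
  · calc distToSet G y s ≤ G.dist v y :=
        (distToSet_le_dist hv y).trans_eq SimpleGraph.dist_comm
      _ ≤ (branchGraph G s p).dist v y := h.dist_anti (deleteEdges_le _)

theorem dist_eq_distToSet (hp : IsParentMap G s p) (hcard : esize G = Fintype.card V) {v y : V}
    (hv : v ∈ s) (h : (branchGraph G s p).Reachable v y) : G.dist y v = distToSet G y s := by
  refine le_antisymm ?_ (distToSet_le_dist hv y)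
  rw [SimpleGraph.dist_comm, ← hp.branchGraph_dist_eq_distToSet hcard hv h]
  exact h.dist_anti (deleteEdges_le _)

theorem sum_branchD [Fintype s] (hp : IsParentMap G s p) (hcard : esize G = Fintype.card V) :
    ∑ v : s, branchD (branchGraph G s p) v = ∑ y, (distToSet G y s : ℝ) := by
  simp only [branchD]
  rw [Finset.sum_comm]
  refine Finset.sum_congr rfl fun y _ => ?_
  have h_reach (v : s) : (branchGraph G s p).Reachable v y ↔ v = ⟨_, hp.branchRoot_mem y⟩ := by
    rw [hp.branchGraph_reachable_iff hcard v.2, eq_comm, Subtype.ext_iff]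
  rw [Finset.sum_eq_single ⟨_, hp.branchRoot_mem y⟩
    (fun v _ hv => if_neg (mt (h_reach v).1 hv)) (by simp), if_pos ((h_reach _).2 rfl),
    hp.branchGraph_dist_eq_distToSet hcard (hp.branchRoot_mem y) ((h_reach _).2 rfl)]

end IsParentMap

end Branches

section Cycle

variable {l : ℕ} [NeZero l]

theorem fin_add_one_add_one_ne (hl : 3 ≤ l) (i : Fin l) : i + 1 + 1 ≠ i := by
  obtain ⟨m, rfl⟩ := Nat.exists_eq_add_of_le' hl
  rw [add_assoc, Ne, add_eq_left, Fin.ext_iff]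
  simp [Fin.val_add, Nat.mod_eq_of_lt]

theorem exists_isParentMap_range [Fintype V] {G : SimpleGraph V} (hG : G.Connected) (hl : 3 ≤ l)
    {c : Fin l → V} (hinj : Function.Injective c) (hadj : ∀ i, G.Adj (c i) (c (i + 1))) :
    ∃ p, IsParentMap G (Set.range c) p ∧ ∀ i, p (c i) = c (i + 1) := by
  have h_parent (y : V) : ∃ w, G.Adj y w ∧ (∀ i, c i = y → w = c (i + 1)) ∧
      (y ∉ Set.range c → distToSet G w (Set.range c) + 1 = distToSet G y (Set.range c)) := by
    by_cases hy : y ∈ Set.range c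
    · obtain ⟨i, rfl⟩ := hy
      exact ⟨c (i + 1), hadj i, fun j hj => by rw [hinj hj], fun h => absurd ⟨i, rfl⟩ h⟩
    · obtain ⟨w, h_adj, h_dist⟩ := exists_adj_distToSet_add_one_eq hG (Set.range_nonempty c) hy
      exact ⟨w, h_adj, fun i hi => absurd ⟨i, hi⟩ hy, fun _ => h_dist⟩
  choose p h_adj h_cycle h_dist using h_parent
  replace h_cycle (i : Fin l) : p (c i) = c (i + 1) := h_cycle _ i rfl
  refine ⟨p, ⟨h_adj, ⟨?_, ?_, ?_⟩, ?_, h_dist⟩, h_cycle⟩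
  · rintro _ ⟨i, rfl⟩
    exact ⟨i + 1, (h_cycle i).symm⟩
  · rintro _ ⟨i, rfl⟩ _ ⟨j, rfl⟩ h
    rw [h_cycle, h_cycle] at h
    rw [add_right_cancel (hinj h)]
  · rintro _ ⟨i, rfl⟩
    exact ⟨c (i - 1), ⟨i - 1, rfl⟩, by rw [h_cycle, sub_add_cancel]⟩
  · rintro _ ⟨i, rfl⟩ h
    rw [h_cycle, h_cycle] at h
    exact fin_add_one_add_one_ne hl i (hinj h)

theorem branchGraph_range (G : SimpleGraph V) {c : Fin l → V} {p : V → V}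
    (hp : ∀ i, p (c i) = c (i + 1)) :
    branchGraph G (Set.range c) p = G.deleteEdges (cycleEdges c) := by
  rw [branchGraph, cycleEdges, ← Set.range_comp]
  simp only [Function.comp_def, hp]

end Cycle

/-- For an `n`-vertex unicyclic graph `G` with `x ∈ V(T_k)`,
`RC(x) = 2n·R(x) − 2·Kf(G) − Σ_{i=1}^{l} D_{T_i}(v_i) + n·d(x,v_k)`. -/
theorem reverseCoverCost_formula [Fintype V] (G : SimpleGraph V) (n l : ℕ) [NeZero l]
    (hn : Fintype.card V = n) (hconn : G.Connected) (huni : esize G = n)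
    (hl : 3 ≤ l) (c : Fin l → V) (hinj : Function.Injective c)
    (hadj : ∀ i : Fin l, G.Adj (c i) (c (i + 1)))
    (k : Fin l) (x : V) (hx : (G.deleteEdges (cycleEdges c)).Reachable (c k) x) :
    reverseCoverCost G x = 2 * (n : ℝ) * Rres G x - 2 * Kf G
      - (∑ i : Fin l, branchD (G.deleteEdges (cycleEdges c)) (c i))
      + (n : ℝ) * (G.dist x (c k) : ℝ) := by
  subst hn
  obtain ⟨p, hp, h_cycle⟩ := exists_isParentMap_range hconn hl hinj hadj
  rw [← branchGraph_range G h_cycle] at hx ⊢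
  have h_branches : ∑ i, branchD (branchGraph G (Set.range c) p) (c i) =
      ∑ y, (distToSet G y (Set.range c) : ℝ) :=
    ((Equiv.ofInjective c hinj).sum_comp fun v : Set.range c => branchD _ (v : V)).trans
      (hp.sum_branchD huni)
  rw [h_branches, hp.dist_eq_distToSet huni ⟨k, rfl⟩ hx]
  exact reverseCoverCost_eq_of_lapMatrix_mulVec_eq hconn (hp.lapMatrix_mulVec_distToSet huni) x
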